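/- Let J be a graph on Z with W ⊊ Z such that J[W,Z] is r-leading and J is (r/2)-sparse. Then for any [W,Z]-tree T, the labeled expectation satisfies ñ_r(T[W,V(T)]) := n^{v(W,V(T))} r^{e(W,V(T))} ≤ μ_r(W,Z) · min{v(W,Z), 16 log₂ n}^{e_T}, where e_T = e(W,V(T)). -/

import Mathlib

open SimpleGraph

/-- Expected number of copies of `F` in `G(n,p)`: `(n)_{v_F} p^{e_F} / aut(F)`. -/
noncomputable def expCount (n : ℕ) (p : ℝ) {β : Type} [Fintype β] (F : SimpleGraph β) : ℝ :=
  (n.descFactorial (Fintype.card β)) * p ^ (Nat.card F.edgeSet) / (Nat.card (F ≃g F))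

/-- `J` is `q`-sparse (w.r.t. ground-set size `n`): every subgraph `I ⊆ J` has
`(n)_{v_I} q^{e_I} / aut(I) ≥ 1`. -/
def ExpSparse (n : ℕ) (q : ℝ) {β : Type} (J : SimpleGraph β) : Prop :=
  ∀ I : J.Subgraph, 1 ≤ (n.descFactorial (Nat.card I.verts)) * q ^ (Nat.card I.edgeSet) /
      (Nat.card (I.coe ≃g I.coe))

/-- `N(H,F)`: the number of subgraphs of `H` isomorphic to `F`. -/
noncomputable def copyCount {α β : Type} (H : SimpleGraph α) (F : SimpleGraph β) : ℕ :=
  Nat.card {H' : H.Subgraph // Nonempty (F ≃g H'.coe)}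

/-- Edge set of the rooted graph `J[W,Z]`: edges of `J` inside `Z` not inside `W`. -/
def rootedEdges {V : Type} (J : SimpleGraph V) (W Z : Finset V) : Set (Sym2 V) :=
  {e | e ∈ J.edgeSet ∧ (∀ x ∈ e, x ∈ Z) ∧ ¬ ∀ x ∈ e, x ∈ W}

/-- `e(W,Z)`: the number of edges of `J[W,Z]`. -/
noncomputable def eWZ {V : Type} (J : SimpleGraph V) (W Z : Finset V) : ℕ :=
  Nat.card (rootedEdges J W Z)

/-- `aut(W,Z)`: the number of automorphisms of `J[W,Z]` fixing `W` pointwise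
(realized as permutations of the ground set fixing everything outside `Z`). -/
noncomputable def autWZ {V : Type} (J : SimpleGraph V) (W Z : Finset V) : ℕ :=
  Nat.card {σ : Equiv.Perm V // (∀ v ∈ W, σ v = v) ∧ (∀ v, v ∉ Z → σ v = v) ∧
     ∀ e, e ∈ rootedEdges J W Z ↔ Sym2.map σ e ∈ rootedEdges J W Z}

/-- `μ_p(W,Z) = n^{v(W,Z)} p^{e(W,Z)} / aut(W,Z)`. -/
noncomputable def mu {V : Type} [DecidableEq V] (n : ℕ) (p : ℝ) (J : SimpleGraph V)
    (W Z : Finset V) : ℝ :=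
  (n : ℝ) ^ ((Z \ W).card) * p ^ (eWZ J W Z) / (autWZ J W Z)

/-- `J[W,Z]` is `p`-leading: `μ_p(Y,Z) < 1` for all `W ⊊ Y ⊊ Z`. -/
def Leading {V : Type} [DecidableEq V] (n : ℕ) (p : ℝ) (J : SimpleGraph V)
    (W Z : Finset V) : Prop :=
  ∀ Y : Finset V, W ⊂ Y → Y ⊂ Z → mu n p J Y Z < 1

lemma mem_rooted {V : Type} (J : SimpleGraph V) (W Z : Finset V) (a b : V) :
    s(a, b) ∈ rootedEdges J W Z ↔ J.Adj a b ∧ (a ∈ Z ∧ b ∈ Z) ∧ ¬ (a ∈ W ∧ b ∈ W) := by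
  simp only [rootedEdges, Set.mem_ofPred_eq, Sym2.ball, SimpleGraph.mem_edgeSet]

/-- The set of automorphisms counted by `autWZ`. -/
def AutSet {V : Type} (J : SimpleGraph V) (W Z : Finset V) : Set (Equiv.Perm V) :=
  {σ | (∀ v ∈ W, σ v = v) ∧ (∀ v, v ∉ Z → σ v = v) ∧
     ∀ e, e ∈ rootedEdges J W Z ↔ Sym2.map σ e ∈ rootedEdges J W Z}

lemma autWZ_eq {V : Type} (J : SimpleGraph V) (W Z : Finset V) :
    autWZ J W Z = (AutSet J W Z).ncard := rfl

lemma autSet_one {V : Type} (J : SimpleGraph V) (W Z : Finset V) : 1 ∈ AutSet J W Z := by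
  refine ⟨by simp, by simp, fun e => ?_⟩
  have : Sym2.map (⇑(1 : Equiv.Perm V)) e = e := by
    rw [Equiv.Perm.coe_one]; simp
  rw [this]

lemma autWZ_pos {V : Type} [Finite V] (J : SimpleGraph V) (W Z : Finset V) :
    0 < autWZ J W Z := by
  rw [autWZ_eq]
  exact (Set.ncard_pos (Set.toFinite _)).2 ⟨1, autSet_one J W Z⟩

lemma autSet_maps {V : Type} {J : SimpleGraph V} {W Z : Finset V} {σ : Equiv.Perm V}
    (h : σ ∈ AutSet J W Z) (v : V) : σ v ∈ Z ↔ v ∈ Z := by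
  constructor
  · intro hv
    by_contra hc
    rw [h.2.1 v hc] at hv; exact hc hv
  · intro hv
    by_contra hc
    have := h.2.1 _ hc
    rw [σ.injective this] at hc; exact hc hv

lemma autSet_mapsW {V : Type} {J : SimpleGraph V} {W Z : Finset V} {σ : Equiv.Perm V}
    (h : σ ∈ AutSet J W Z) (v : V) : σ v ∈ W ↔ v ∈ W := by
  constructor
  · intro hv
    have := h.1 _ hv
    rwa [σ.injective this] at hv
  · intro hv
    rwa [h.1 v hv]

lemma autSet_inv_mul {V : Type} {J : SimpleGraph V} {W Z : Finset V} {σ τ : Equiv.Perm V}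
    (h : σ ∈ AutSet J W Z) (h' : τ ∈ AutSet J W Z) : τ⁻¹ * σ ∈ AutSet J W Z := by
  refine ⟨fun v hv => ?_, fun v hv => ?_, fun e => ?_⟩
  · rw [Equiv.Perm.mul_apply, h.1 v hv, Equiv.Perm.inv_eq_iff_eq, h'.1 v hv]
  · rw [Equiv.Perm.mul_apply, h.2.1 v hv, Equiv.Perm.inv_eq_iff_eq, h'.2.1 v hv]
  · rw [h'.2.2 (Sym2.map (⇑(τ⁻¹ * σ)) e), Sym2.map_map, h.2.2 e]
    have : (⇑τ ∘ ⇑(τ⁻¹ * σ)) = ⇑σ := by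
      ext x; simp
    rw [this]

lemma autSet_insert {V : Type} [DecidableEq V] {J : SimpleGraph V} {W Z : Finset V}
    {σ : Equiv.Perm V} {z : V} :
    (σ ∈ AutSet J (insert z W) Z) ↔ (σ ∈ AutSet J W Z ∧ σ z = z) := by
  constructor
  · intro h
    have hW : ∀ v ∈ W, σ v = v := fun v hv => h.1 v (Finset.mem_insert_of_mem hv)
    have hz : σ z = z := h.1 z (Finset.mem_insert_self _ _)
    refine ⟨⟨hW, h.2.1, fun e => ?_⟩, hz⟩
    induction e with
    | _ a b =>
    by_cases hab : a ∈ insert z W ∧ b ∈ insert z W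
    · rw [Sym2.map_mk, h.1 a hab.1, h.1 b hab.2]
    · have h1 := h.2.2 s(a, b)
      have ha := autSet_mapsW h a
      have hb := autSet_mapsW h b
      rw [Sym2.map_mk] at h1 ⊢
      rw [mem_rooted, mem_rooted] at h1 ⊢
      have hab' : ¬ (σ a ∈ insert z W ∧ σ b ∈ insert z W) := by rwa [ha, hb]
      have hab2 : ¬ (a ∈ W ∧ b ∈ W) := fun hh =>
        hab ⟨Finset.mem_insert_of_mem hh.1, Finset.mem_insert_of_mem hh.2⟩
      have hab2' : ¬ (σ a ∈ W ∧ σ b ∈ W) := fun hh =>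
        hab' ⟨Finset.mem_insert_of_mem hh.1, Finset.mem_insert_of_mem hh.2⟩
      simp only [hab, hab', not_false_iff, and_true] at h1
      simp only [hab2, hab2', not_false_iff, and_true]
      exact h1
  · rintro ⟨h, hz⟩
    have hW : ∀ v ∈ insert z W, σ v = v := by
      intro v hv
      rcases Finset.mem_insert.1 hv with rfl | hv
      · exact hz
      · exact h.1 v hv
    have hW' : ∀ v, σ v ∈ insert z W ↔ v ∈ insert z W := by
      intro v
      constructor
      · intro hv
        have := hW _ hv
        rwa [σ.injective this] at hv
      · intro hv
        rwa [hW v hv]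
    refine ⟨hW, h.2.1, fun e => ?_⟩
    induction e with
    | _ a b =>
    have h1 := h.2.2 s(a, b)
    rw [Sym2.map_mk] at h1 ⊢
    rw [mem_rooted, mem_rooted] at h1 ⊢
    rw [hW', hW']
    by_cases hab : a ∈ insert z W ∧ b ∈ insert z W
    · simp only [hab, and_self, not_true, and_false]
    · have hab2 : ¬ (a ∈ W ∧ b ∈ W) := fun hh =>
        hab ⟨Finset.mem_insert_of_mem hh.1, Finset.mem_insert_of_mem hh.2⟩
      have hab' : ¬ (σ a ∈ insert z W ∧ σ b ∈ insert z W) := by rwa [hW', hW']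
      have hab2' : ¬ (σ a ∈ W ∧ σ b ∈ W) := fun hh =>
        hab' ⟨Finset.mem_insert_of_mem hh.1, Finset.mem_insert_of_mem hh.2⟩
      simp only [hab2, hab2', not_false_iff, and_true] at h1
      simp only [hab, not_false_iff, and_true]
      exact h1

lemma autWZ_insert_le {V : Type} [DecidableEq V] [Finite V] (J : SimpleGraph V)
    (W Z : Finset V) (z : V) : autWZ J (insert z W) Z ≤ autWZ J W Z := by
  rw [autWZ_eq, autWZ_eq]
  exact Set.ncard_le_ncard (fun σ h => (autSet_insert.1 h).1) (Set.toFinite _)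

/-- Orbit bound. -/
lemma autWZ_orbit {V : Type} [DecidableEq V] [Fintype V] (J : SimpleGraph V)
    (W Z S : Finset V) (z : V) (hS : ∀ σ ∈ AutSet J W Z, σ z ∈ S) :
    autWZ J W Z ≤ S.card * autWZ J (insert z W) Z := by
  classical
  rw [autWZ_eq, autWZ_eq, Set.ncard_eq_toFinset_card', Set.ncard_eq_toFinset_card', mul_comm]
  apply Finset.card_le_mul_card_image_of_maps_to (f := fun σ : Equiv.Perm V => σ z) (t := S)
  · intro σ hσ
    simpa using hS σ (by simpa using hσ)
  · intro y hy
    by_cases hne : ((AutSet J W Z).toFinset.filter (fun σ => σ z = y)).Nonempty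
    · obtain ⟨τ, hτ⟩ := hne
      simp only [Finset.mem_filter, Set.mem_toFinset] at hτ
      apply Finset.card_le_card_of_injOn (fun σ => τ⁻¹ * σ)
      · intro σ hσ
        simp only [Finset.coe_filter, Set.mem_ofPred_eq, Set.mem_toFinset] at hσ
        simp only [Set.coe_toFinset]
        rw [autSet_insert]
        refine ⟨autSet_inv_mul hσ.1 hτ.1, ?_⟩
        rw [Equiv.Perm.mul_apply, Equiv.Perm.inv_eq_iff_eq, hσ.2, hτ.2]
      · intro a _ b _ hab
        exact mul_left_cancel hab
    · rw [Finset.not_nonempty_iff_eq_empty] at hne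
      rw [hne]; simp

lemma autWZ_self {V : Type} [Finite V] (J : SimpleGraph V) (Z : Finset V) :
    autWZ J Z Z = 1 := by
  rw [autWZ_eq, Set.ncard_eq_one]
  refine ⟨1, Set.eq_singleton_iff_unique_mem.2 ⟨autSet_one J Z Z, fun σ h => ?_⟩⟩
  ext v
  by_cases hv : v ∈ Z
  · simpa using h.1 v hv
  · simpa using h.2.1 v hv

lemma orbit_sdiff {V : Type} [DecidableEq V] {J : SimpleGraph V}
    {W Z : Finset V} {z : V} (hz : z ∈ Z \ W) : ∀ σ ∈ AutSet J W Z, σ z ∈ Z \ W := by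
  intro σ h
  rw [Finset.mem_sdiff, autSet_maps h, autSet_mapsW h]
  exact Finset.mem_sdiff.1 hz

lemma autWZ_card_one {V : Type} [DecidableEq V] [Fintype V] (J : SimpleGraph V)
    (W Z : Finset V) (hWZ : W ⊆ Z) (h : (Z \ W).card = 1) : autWZ J W Z = 1 := by
  obtain ⟨z, hz⟩ := Finset.card_eq_one.1 h
  have hzm : z ∈ Z \ W := by rw [hz]; simp
  have h1 := autWZ_orbit J W Z (Z \ W) z (orbit_sdiff hzm)
  have : insert z W = Z := by
    rw [Finset.insert_eq, ← hz, Finset.sdiff_union_of_subset hWZ]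
  rw [this, autWZ_self, h] at h1
  have := autWZ_pos J W Z
  omega

/-- the vertices of `W` having a neighbour in `Z \ W` -/
noncomputable def nbW {V : Type} [DecidableEq V] (J : SimpleGraph V) (W Z : Finset V) : Finset V :=
  open Classical in W.filter (fun w => ∃ z ∈ Z \ W, J.Adj w z)

lemma mem_nbW {V : Type} [DecidableEq V] {J : SimpleGraph V} {W Z : Finset V} {w : V} :
    w ∈ nbW J W Z ↔ w ∈ W ∧ ∃ z ∈ Z \ W, J.Adj w z := by
  classical
  unfold nbW
  simp only [Finset.mem_filter]

lemma eWZ_insert_le {V : Type} [DecidableEq V] [Finite V] (J : SimpleGraph V)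
    (W Z : Finset V) (z : V) : eWZ J (insert z W) Z ≤ eWZ J W Z := by
  unfold eWZ
  apply Nat.card_mono (Set.toFinite _)
  rintro e ⟨h1, h2, h3⟩
  exact ⟨h1, h2, fun h => h3 fun x hx => Finset.mem_insert_of_mem (h x hx)⟩

lemma eWZ_insert_lt {V : Type} [DecidableEq V] [Finite V] (J : SimpleGraph V)
    (W Z : Finset V) (z w : V) (hz : z ∈ Z \ W) (hw : w ∈ W) (hwZ : W ⊆ Z) (ha : J.Adj w z) :
    eWZ J (insert z W) Z < eWZ J W Z := by
  unfold eWZ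
  rw [Nat.card_coe_set_eq, Nat.card_coe_set_eq]
  apply Set.ncard_lt_ncard _ (Set.toFinite _)
  rw [Set.ssubset_iff_of_subset]
  · rw [Finset.mem_sdiff] at hz
    refine ⟨s(w, z), ?_, ?_⟩
    · rw [mem_rooted]; exact ⟨ha, ⟨hwZ hw, hz.1⟩, fun h => hz.2 h.2⟩
    · rw [mem_rooted]; simp [hw]
  · rintro e ⟨h1, h2, h3⟩
    exact ⟨h1, h2, fun h => h3 fun x hx => Finset.mem_insert_of_mem (h x hx)⟩

/-- The subgraph of `J[Z]` formed by the rooted edges. -/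
noncomputable def rootedSub {V : Type} [DecidableEq V] (J : SimpleGraph V) (W Z : Finset V) :
    (J.induce (Z : Set V)).Subgraph where
  verts := {x | (x : V) ∉ W ∨ (x : V) ∈ nbW J W Z}
  Adj a b := s((a : V), (b : V)) ∈ rootedEdges J W Z
  adj_sub := by
    intro a b h
    rw [mem_rooted] at h
    exact h.1
  edge_vert := by
    intro a b h
    rw [mem_rooted] at h
    by_cases ha : (a : V) ∈ W
    · right
      exact mem_nbW.2 ⟨ha, b, Finset.mem_sdiff.2 ⟨h.2.1.2, fun hb => h.2.2 ⟨ha, hb⟩⟩, h.1⟩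
    · left; exact ha
  symm := ⟨by
    intro a b h
    rwa [Sym2.eq_swap]⟩

lemma rootedSub_verts {V : Type} [DecidableEq V] [Finite V] (J : SimpleGraph V) (W Z : Finset V) :
    Nat.card (rootedSub J W Z).verts ≤ (Z \ W).card + (nbW J W Z).card := by
  refine le_trans ?_ (Finset.card_union_le _ _)
  rw [Nat.card_coe_set_eq, ← Set.ncard_image_of_injective _ Subtype.val_injective,
    ← Set.ncard_coe_finset]
  apply Set.ncard_le_ncard _ (Set.toFinite _)
  rintro _ ⟨x, hx, rfl⟩
  have hxZ : (x : V) ∈ Z := x.2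
  have hx' : (x : V) ∉ W ∨ (x : V) ∈ nbW J W Z := hx
  simp only [Finset.coe_union, Set.mem_union, Finset.mem_coe, Finset.mem_sdiff]
  tauto

lemma rootedSub_edges {V : Type} [DecidableEq V] [Finite V] (J : SimpleGraph V) (W Z : Finset V) :
    eWZ J W Z ≤ Nat.card (rootedSub J W Z).edgeSet := by
  unfold eWZ
  rw [Nat.card_coe_set_eq, Nat.card_coe_set_eq, ← Set.ncard_image_of_injective (rootedSub J W Z).edgeSet
    (Sym2.map.injective Subtype.val_injective)]
  apply Set.ncard_le_ncard _ (Set.toFinite _)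
  intro e he
  induction e with
  | _ a b =>
  have h := he
  rw [mem_rooted] at h
  refine ⟨s(⟨a, h.2.1.1⟩, ⟨b, h.2.1.2⟩), ?_, by simp⟩
  rw [SimpleGraph.Subgraph.mem_edgeSet]
  exact he

/-- the restriction of an automorphism to the rooted subgraph -/
noncomputable def restrictAut {V : Type} [DecidableEq V] (J : SimpleGraph V) (W Z : Finset V)
    (σ : Equiv.Perm V) (h : σ ∈ AutSet J W Z) :
    (rootedSub J W Z).coe ≃g (rootedSub J W Z).coe where
  toEquiv := (σ.subtypePerm (p := fun x => x ∈ (Z : Set V))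
      (fun x => by simpa using (autSet_maps h x))).subtypePerm
      (p := fun x => x ∈ (rootedSub J W Z).verts) (by
        intro x
        have h1 := autSet_mapsW h x
        change ((σ x : V) ∉ W ∨ (σ x : V) ∈ nbW J W Z) ↔ ((x : V) ∉ W ∨ (x : V) ∈ nbW J W Z)
        by_cases hx : (x : V) ∈ W
        · rw [h.1 _ hx]
        · rw [h1]; simp [hx])
  map_rel_iff' := by
    rintro ⟨⟨a, ha⟩, ha'⟩ ⟨⟨b, hb⟩, hb'⟩
    exact (h.2.2 s(a, b)).symm

lemma rootedSub_aut {V : Type} [DecidableEq V] [Finite V] (J : SimpleGraph V) (W Z : Finset V) :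
    autWZ J W Z ≤ Nat.card ((rootedSub J W Z).coe ≃g (rootedSub J W Z).coe) := by
  have : Finite ((rootedSub J W Z).coe ≃g (rootedSub J W Z).coe) :=
    Finite.of_injective (fun f => f.toEquiv) (fun f g h => RelIso.toEquiv_injective h)
  refine Nat.card_le_card_of_injective
    (fun σ : {σ // σ ∈ AutSet J W Z} => restrictAut J W Z σ.1 σ.2) ?_
  rintro ⟨σ, hσ⟩ ⟨τ, hτ⟩ h
  apply Subtype.ext
  ext v
  change σ v = τ v
  by_cases hv : v ∈ Z
  · by_cases hw : v ∈ W
    · rw [hσ.1 v hw, hτ.1 v hw]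
    · have := congrArg (fun f : (rootedSub J W Z).coe ≃g (rootedSub J W Z).coe =>
        ((f ⟨⟨v, hv⟩, Or.inl hw⟩ : (rootedSub J W Z).verts) : (Z : Set V)).1) h
      exact this
  · rw [hσ.2.1 v hv, hτ.2.1 v hv]

lemma sparse_ineq {n : ℕ} {r : ℝ} (hr0 : 0 ≤ r) (hr1 : r ≤ 1) (hn : 1 ≤ n)
    (J : SimpleGraph (Fin n)) (W Z : Finset (Fin n))
    (hsparse : ExpSparse n (r / 2) (J.induce (Z : Set (Fin n)))) :
    (autWZ J W Z : ℝ) * 2 ^ (eWZ J W Z) ≤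
      (n : ℝ) ^ ((Z \ W).card + (nbW J W Z).card) * r ^ (eWZ J W Z) := by
  have h := hsparse (rootedSub J W Z)
  have hA : (autWZ J W Z : ℝ) ≤ (Nat.card ((rootedSub J W Z).coe ≃g (rootedSub J W Z).coe) : ℝ) := by
    exact_mod_cast rootedSub_aut J W Z
  have hpos : (0 : ℝ) < autWZ J W Z := by exact_mod_cast autWZ_pos J W Z
  rw [le_div_iff₀ (lt_of_lt_of_le hpos hA), one_mul] at h
  have hn' : (1 : ℝ) ≤ n := by exact_mod_cast hn
  have h1 : ((n.descFactorial (Nat.card (rootedSub J W Z).verts) : ℕ) : ℝ) ≤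
      (n : ℝ) ^ ((Z \ W).card + (nbW J W Z).card) := by
    calc ((n.descFactorial (Nat.card (rootedSub J W Z).verts) : ℕ) : ℝ)
        ≤ (n : ℝ) ^ (Nat.card (rootedSub J W Z).verts) := by
          exact_mod_cast Nat.descFactorial_le_pow _ _
      _ ≤ _ := pow_le_pow_right₀ hn' (rootedSub_verts J W Z)
  have h2 : (r / 2) ^ (Nat.card (rootedSub J W Z).edgeSet) ≤ (r / 2) ^ (eWZ J W Z) :=
    pow_le_pow_of_le_one (by linarith) (by linarith) (rootedSub_edges J W Z)
  have h3 : (autWZ J W Z : ℝ) ≤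
      (n : ℝ) ^ ((Z \ W).card + (nbW J W Z).card) * (r / 2) ^ (eWZ J W Z) := by
    refine hA.trans (h.trans ?_)
    exact mul_le_mul h1 h2 (by positivity) (by positivity)
  calc (autWZ J W Z : ℝ) * 2 ^ (eWZ J W Z) ≤
      ((n : ℝ) ^ ((Z \ W).card + (nbW J W Z).card) * (r / 2) ^ (eWZ J W Z)) * 2 ^ (eWZ J W Z) := by
        gcongr
    _ = _ := by
        rw [mul_assoc, ← mul_pow]
        congr 2
        ring

lemma two_pow_lt {n : ℕ} {r : ℝ} (hr0 : 0 ≤ r) (hr1 : r ≤ 1) (hn : 1 ≤ n)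
    (J : SimpleGraph (Fin n)) (W Z : Finset (Fin n))
    (hsparse : ExpSparse n (r / 2) (J.induce (Z : Set (Fin n)))) (t : ℕ)
    (h : (n : ℝ) ^ ((Z \ W).card) * r ^ (eWZ J W Z) < (n : ℝ) ^ t * autWZ J W Z) :
    (2 : ℝ) ^ (eWZ J W Z) < (n : ℝ) ^ ((nbW J W Z).card + t) := by
  have h1 := sparse_ineq hr0 hr1 hn J W Z hsparse
  have hpos : (0 : ℝ) < autWZ J W Z := by exact_mod_cast autWZ_pos J W Z
  have hn' : (1 : ℝ) ≤ n := by exact_mod_cast hn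
  have hq : (0 : ℝ) < (n : ℝ) ^ (nbW J W Z).card := by positivity
  have h2 := mul_lt_mul_of_pos_left h hq
  have h3 : (autWZ J W Z : ℝ) * 2 ^ (eWZ J W Z) <
      autWZ J W Z * (n : ℝ) ^ ((nbW J W Z).card + t) := by
    refine lt_of_le_of_lt h1 ?_
    calc _ = (n : ℝ) ^ (nbW J W Z).card * ((n : ℝ) ^ ((Z \ W).card) * r ^ (eWZ J W Z)) := by ring
      _ < _ := h2
      _ = _ := by ring
  exact lt_of_mul_lt_mul_left h3 hpos.le

lemma exp_le_log {n e q : ℕ} (hn : 1 ≤ n) (h : (2 : ℝ) ^ e < (n : ℝ) ^ q) :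
    (e : ℝ) ≤ q * Real.logb 2 n := by
  have hn' : (1 : ℝ) ≤ n := by exact_mod_cast hn
  have := Real.logb_le_logb_of_le (b := 2) (by norm_num) (by positivity) h.le
  rw [Real.logb_pow, Real.logb_pow, Real.logb_self_eq_one (by norm_num)] at this
  linarith

open Classical in
lemma exists_low_deg {n : ℕ} (hn : 1 ≤ n)
    (J : SimpleGraph (Fin n)) (W Z : Finset (Fin n)) (hWZ : W ⊆ Z)
    (hq : 1 ≤ (nbW J W Z).card)
    (h : (2 : ℝ) ^ (eWZ J W Z) < (n : ℝ) ^ ((nbW J W Z).card + 1)) :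
    ∃ w ∈ W, ∃ z ∈ Z \ W, J.Adj w z ∧
      (((Z \ W).filter (fun x => J.Adj w x)).card : ℝ) ≤ 2 * Real.logb 2 n := by
  have hn' : (1 : ℝ) ≤ n := by exact_mod_cast hn
  have h1 := exp_le_log hn h
  have hlog : 0 ≤ Real.logb 2 n := Real.logb_nonneg (by norm_num) hn'
  have hsum : (∑ w ∈ nbW J W Z, ((Z \ W).filter (fun x => J.Adj w x)).card) ≤ eWZ J W Z := by
    rw [← Finset.card_sigma]
    unfold eWZ
    rw [Nat.card_coe_set_eq, Set.ncard_eq_toFinset_card']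
    apply Finset.card_le_card_of_injOn (fun p => s(p.1, p.2))
    · rintro ⟨w, z⟩ hp
      simp only [Finset.coe_sigma, Set.mem_sigma_iff, Finset.mem_coe, Finset.mem_filter,
        Finset.mem_sdiff, mem_nbW] at hp
      simp only [Set.coe_toFinset, mem_rooted]
      exact ⟨hp.2.2, ⟨hWZ hp.1.1, hp.2.1.1⟩, fun hh => hp.2.1.2 hh.2⟩
    · rintro ⟨w, z⟩ hp ⟨w', z'⟩ hp' heq
      simp only [Finset.coe_sigma, Set.mem_sigma_iff, Finset.mem_coe, Finset.mem_filter,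
        Finset.mem_sdiff, mem_nbW] at hp hp'
      simp only [Sym2.eq_iff] at heq
      rcases heq with ⟨rfl, rfl⟩ | ⟨rfl, rfl⟩
      · rfl
      · exact absurd hp.1.1 hp'.2.1.2
  have hsum' : (∑ w ∈ nbW J W Z, (((Z \ W).filter (fun x => J.Adj w x)).card : ℝ)) ≤
      ∑ w ∈ nbW J W Z, 2 * Real.logb 2 n := by
    rw [Finset.sum_const, nsmul_eq_mul]
    have h2 : (∑ w ∈ nbW J W Z, (((Z \ W).filter (fun x => J.Adj w x)).card : ℝ)) ≤ eWZ J W Z := by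
      exact_mod_cast hsum
    have hq' : (1 : ℝ) ≤ (nbW J W Z).card := by exact_mod_cast hq
    push_cast at h1
    nlinarith
  obtain ⟨w, hw, hle⟩ := Finset.exists_le_of_sum_le (Finset.card_pos.1 hq) hsum'
  obtain ⟨hwW, z, hz, ha⟩ := mem_nbW.1 hw
  exact ⟨w, hwW, z, hz, ha, hle⟩

open Classical in
lemma orbit_adj {n : ℕ} {J : SimpleGraph (Fin n)} {W Z : Finset (Fin n)} (hWZ : W ⊆ Z)
    {w z : Fin n} (hw : w ∈ W) (hz : z ∈ Z \ W) (ha : J.Adj w z) :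
    ∀ σ ∈ AutSet J W Z, σ z ∈ (Z \ W).filter (fun x => J.Adj w x) := by
  intro σ h
  rw [Finset.mem_filter]
  refine ⟨orbit_sdiff hz σ h, ?_⟩
  rw [Finset.mem_sdiff] at hz
  have h1 := (h.2.2 s(w, z)).1 ((mem_rooted ..).2 ⟨ha, ⟨hWZ hw, hz.1⟩, fun hh => hz.2 hh.2⟩)
  rw [Sym2.map_mk, mem_rooted, h.1 w hw] at h1
  exact h1.1

lemma mu_lt_one_iff {n : ℕ} {r : ℝ} (J : SimpleGraph (Fin n)) (W Z : Finset (Fin n)) :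
    mu n r J W Z < 1 ↔ (n : ℝ) ^ ((Z \ W).card) * r ^ (eWZ J W Z) < autWZ J W Z := by
  have hpos : (0 : ℝ) < autWZ J W Z := by exact_mod_cast autWZ_pos J W Z
  unfold mu
  rw [div_lt_one hpos]

lemma card_sdiff_insert {n : ℕ} {W Z : Finset (Fin n)} {z : Fin n} (hz : z ∈ Z \ W) :
    (Z \ insert z W).card + 1 = (Z \ W).card := by
  rw [Finset.sdiff_insert, Finset.card_erase_of_mem hz]
  have := Finset.card_pos.2 ⟨z, hz⟩
  omega

lemma insert_ssub {n : ℕ} {W Z : Finset (Fin n)} {z : Fin n} (hWZ : W ⊆ Z) (hz : z ∈ Z \ W)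
    (hv : 2 ≤ (Z \ W).card) : insert z W ⊂ Z := by
  have h1 := card_sdiff_insert hz
  rw [Finset.ssubset_iff_subset_ne]
  refine ⟨Finset.insert_subset (Finset.mem_sdiff.1 hz).1 hWZ, fun h => ?_⟩
  rw [h] at h1
  simp at h1
  omega

/-- orbit step -/
lemma orbit_step {n : ℕ} {K : ℝ} (J : SimpleGraph (Fin n)) (W Z : Finset (Fin n)) (hWZ : W ⊆ Z)
    (hK : min (((Z \ W).card : ℝ)) (2 * Real.logb 2 n) ≤ K)
    (hn : 1 ≤ n) (hq : 1 ≤ (nbW J W Z).card)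
    (h : (2 : ℝ) ^ (eWZ J W Z) < (n : ℝ) ^ ((nbW J W Z).card + 1)) :
    ∃ w ∈ W, ∃ z ∈ Z \ W, J.Adj w z ∧
      (autWZ J W Z : ℝ) ≤ K * autWZ J (insert z W) Z := by
  classical
  obtain ⟨w, hw, z, hz, ha, hd⟩ := exists_low_deg hn J W Z hWZ hq h
  refine ⟨w, hw, z, hz, ha, ?_⟩
  have h1 : (autWZ J W Z : ℝ) ≤ (Z \ W).card * autWZ J (insert z W) Z := by
    exact_mod_cast autWZ_orbit J W Z _ z (orbit_sdiff hz)
  have h2 : (autWZ J W Z : ℝ) ≤ ((Z \ W).filter (fun x => J.Adj w x)).card *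
      autWZ J (insert z W) Z := by
    exact_mod_cast autWZ_orbit J W Z _ z (orbit_adj hWZ hw hz ha)
  have h3 : (0 : ℝ) ≤ autWZ J (insert z W) Z := by positivity
  rcases min_le_iff.1 hK with h | h
  · exact h1.trans (mul_le_mul_of_nonneg_right h h3)
  · exact h2.trans (mul_le_mul_of_nonneg_right (hd.trans h) h3)

lemma claimA {n : ℕ} {r K : ℝ} (hr0 : 0 ≤ r) (hr1 : r ≤ 1) (hn : 1 ≤ n) (hK1 : 1 ≤ K)
    (J : SimpleGraph (Fin n)) (Z : Finset (Fin n))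
    (hsparse : ExpSparse n (r / 2) (J.induce (Z : Set (Fin n)))) (d : ℕ) :
    ∀ W : Finset (Fin n), (Z \ W).card = d → W ⊂ Z →
      (∀ Y, W ⊆ Y → Y ⊂ Z → mu n r J Y Z < 1) →
      min (((Z \ W).card : ℝ)) (2 * Real.logb 2 n) ≤ K →
      K * (autWZ J W Z : ℝ) ≤ K ^ (eWZ J W Z) := by
  have hn' : (1 : ℝ) ≤ n := by exact_mod_cast hn
  induction d with
  | zero =>
    intro W hd hWZ
    rw [Finset.card_eq_zero, Finset.sdiff_eq_empty_iff_subset] at hd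
    exact absurd hd hWZ.2
  | succ d ih =>
    intro W hd hWZ hlead hK
    have hmu := (mu_lt_one_iff J W Z).1 (hlead W (Finset.Subset.refl _) hWZ)
    have h2 := two_pow_lt hr0 hr1 hn J W Z hsparse 0 (by simpa using hmu)
    have hq : 1 ≤ (nbW J W Z).card := by
      by_contra hc
      have hc' : (nbW J W Z).card = 0 := by omega
      rw [hc'] at h2
      have : (1 : ℝ) ≤ 2 ^ (eWZ J W Z) := one_le_pow₀ (by norm_num)
      simp at h2
      linarith
    have h2' : (2 : ℝ) ^ (eWZ J W Z) < (n : ℝ) ^ ((nbW J W Z).card + 1) :=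
      lt_of_lt_of_le h2 (pow_le_pow_right₀ hn' (by omega))
    obtain ⟨w, hw, z, hz, ha, hle⟩ := orbit_step J W Z hWZ.1 hK hn hq h2'
    have hlt := eWZ_insert_lt J W Z z w hz hw hWZ.1 ha
    have hcard := card_sdiff_insert hz
    rcases Nat.eq_zero_or_pos d with rfl | hdpos
    · rw [autWZ_card_one J W Z hWZ.1 (by omega)]
      have : K ^ 1 ≤ K ^ (eWZ J W Z) := pow_le_pow_right₀ hK1 (by omega)
      simpa using this
    · have hss := insert_ssub hWZ.1 hz (by omega)
      have h3 := ih (insert z W) (by omega) hss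
        (fun Y hY hYZ => hlead Y ((Finset.subset_insert _ _).trans hY) hYZ)
        (le_trans (min_le_min_right _ (by exact_mod_cast (by omega))) hK)
      calc K * (autWZ J W Z : ℝ) ≤ K * (K * autWZ J (insert z W) Z) := by gcongr
        _ ≤ K * K ^ (eWZ J (insert z W) Z) := by gcongr
        _ = K ^ (eWZ J (insert z W) Z + 1) := by ring
        _ ≤ K ^ (eWZ J W Z) := pow_le_pow_right₀ hK1 (by omega)

lemma card_le_two_mul_edges {n : ℕ} {r : ℝ} (hn : 1 ≤ n)
    (J : SimpleGraph (Fin n)) (W Z : Finset (Fin n)) (hWZ : W ⊆ Z) (hv : 2 ≤ (Z \ W).card)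
    (hlead : Leading n r J W Z) : (Z \ W).card ≤ 2 * eWZ J W Z := by
  classical
  have hn' : (1 : ℝ) ≤ n := by exact_mod_cast hn
  have hcov : (Z \ W) ⊆ (rootedEdges J W Z).toFinset.biUnion (fun e => e.toFinset) := by
    intro z hz
    have hz' := Finset.mem_sdiff.1 hz
    have hsub : W ⊆ Z.erase z := fun x hx => Finset.mem_erase.2
      ⟨fun h => hz'.2 (h ▸ hx), hWZ hx⟩
    have hcard : (Z \ Z.erase z).card = 1 := by
      rw [Finset.sdiff_erase_self hz'.1]; simp
    have hss : W ⊂ Z.erase z := by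
      refine Finset.ssubset_iff_subset_ne.2 ⟨hsub, fun h => ?_⟩
      rw [← h] at hcard
      omega
    have h1 := (mu_lt_one_iff J _ Z).1 (hlead _ hss (Finset.erase_ssubset hz'.1))
    rw [hcard, autWZ_card_one J _ Z (Finset.erase_subset _ _) hcard] at h1
    have hne : eWZ J (Z.erase z) Z ≠ 0 := by
      intro h0
      rw [h0] at h1
      simp at h1
      omega
    unfold eWZ at hne
    rw [Nat.card_coe_set_eq] at hne
    obtain ⟨e, he⟩ := Set.nonempty_of_ncard_ne_zero hne
    rw [Finset.mem_biUnion]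
    obtain ⟨h1, h2, h3⟩ := he
    refine ⟨e, ?_, ?_⟩
    · rw [Set.mem_toFinset]
      exact ⟨h1, h2, fun h => h3 fun x hx => hsub (h x hx)⟩
    · rw [Sym2.mem_toFinset]
      push Not at h3
      obtain ⟨x, hx, hxz⟩ := h3
      have := h2 x hx
      have hxz' : x = z := by
        by_contra hc
        exact hxz (Finset.mem_erase.2 ⟨hc, this⟩)
      rwa [← hxz']
  refine (Finset.card_le_card hcov).trans ?_
  unfold eWZ
  rw [Nat.card_coe_set_eq, Set.ncard_eq_toFinset_card', mul_comm]
  apply Finset.card_biUnion_le_card_mul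
  intro e _
  rw [Sym2.card_toFinset]
  split_ifs <;> omega

lemma claimB {n : ℕ} {r K : ℝ} (hr0 : 0 ≤ r) (hr1 : r ≤ 1) (hn : 1 ≤ n) (hK1 : 1 ≤ K)
    (J : SimpleGraph (Fin n)) (W Z : Finset (Fin n)) (hWZ : W ⊂ Z)
    (hsparse : ExpSparse n (r / 2) (J.induce (Z : Set (Fin n))))
    (hlead : Leading n r J W Z)
    (hK : min (((Z \ W).card : ℝ)) (2 * Real.logb 2 n) ≤ K) :
    (autWZ J W Z : ℝ) ≤ K ^ (eWZ J W Z) := by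
  have hn' : (1 : ℝ) ≤ n := by exact_mod_cast hn
  have hvpos : 0 < (Z \ W).card := by
    rw [Finset.card_pos]; exact Finset.sdiff_nonempty.2 hWZ.2
  rcases Nat.lt_or_ge (Z \ W).card 2 with hv | hv
  · rw [autWZ_card_one J W Z hWZ.1 (by omega)]
    simpa using one_le_pow₀ hK1
  -- it suffices to find a vertex with a small orbit
  suffices hz : ∃ z ∈ Z \ W, (autWZ J W Z : ℝ) ≤ K * autWZ J (insert z W) Z by
    obtain ⟨z, hz, hle⟩ := hz
    have hcard := card_sdiff_insert hz
    have hss := insert_ssub hWZ.1 hz hv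
    have hzW := (Finset.mem_sdiff.1 hz).2
    have h3 := claimA hr0 hr1 hn hK1 J Z hsparse _ (insert z W) rfl hss
        (fun Y hY hYZ => hlead Y ((Finset.ssubset_insert hzW).trans_subset hY) hYZ)
        (le_trans (min_le_min_right _ (by exact_mod_cast (by omega))) hK)
    exact hle.trans (h3.trans (pow_le_pow_right₀ hK1 (eWZ_insert_le J W Z z)))
  obtain ⟨z, hz⟩ := Finset.card_pos.1 hvpos
  have h2 : (2 : ℝ) ^ (eWZ J W Z) < (n : ℝ) ^ ((nbW J W Z).card + 1) := by
    apply two_pow_lt hr0 hr1 hn J W Z hsparse 1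
    have hss := insert_ssub hWZ.1 hz hv
    have hzW := (Finset.mem_sdiff.1 hz).2
    have h1 := (mu_lt_one_iff J _ Z).1 (hlead _ (Finset.ssubset_insert hzW) hss)
    have hcard := card_sdiff_insert hz
    have ha : (autWZ J (insert z W) Z : ℝ) ≤ autWZ J W Z := by
      exact_mod_cast autWZ_insert_le J W Z z
    have he : r ^ (eWZ J W Z) ≤ r ^ (eWZ J (insert z W) Z) :=
      pow_le_pow_of_le_one hr0 hr1 (eWZ_insert_le J W Z z)
    rw [← hcard, pow_succ, pow_one, mul_comm ((n : ℝ) ^ _) (n : ℝ), mul_assoc]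
    apply mul_lt_mul_of_pos_left _ (by linarith)
    calc _ ≤ (n : ℝ) ^ (Z \ insert z W).card * r ^ (eWZ J (insert z W) Z) := by gcongr
      _ < _ := h1
      _ ≤ _ := ha
  rcases Nat.eq_zero_or_pos (nbW J W Z).card with hq | hq
  · refine ⟨z, hz, ?_⟩
    have h1 : (autWZ J W Z : ℝ) ≤ (Z \ W).card * autWZ J (insert z W) Z := by
      exact_mod_cast autWZ_orbit J W Z _ z (orbit_sdiff hz)
    refine h1.trans (mul_le_mul_of_nonneg_right ?_ (by positivity))
    rcases min_le_iff.1 hK with h | h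
    · exact h
    · have h4 := exp_le_log hn h2
      rw [hq] at h4
      have h5 : ((Z \ W).card : ℝ) ≤ 2 * eWZ J W Z := by
        exact_mod_cast card_le_two_mul_edges hn J W Z hWZ.1 hv hlead
      push_cast at h4
      linarith
  · obtain ⟨w, hw, z, hz, ha, hle⟩ := orbit_step J W Z hWZ.1 hK hn hq h2
    exact ⟨z, hz, hle⟩

lemma map_injOn_rooted {n : ℕ} {J : SimpleGraph (Fin n)} {W Z : Finset (Fin n)}
    {f : Fin n → Fin n} (hf : Set.InjOn f (Z : Set (Fin n))) :
    Set.InjOn (Sym2.map f) (rootedEdges J W Z) := by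
  intro a ha b hb hab
  induction a with
  | _ a a' =>
  induction b with
  | _ b b' =>
  rw [mem_rooted] at ha hb
  obtain ⟨-, ⟨h1, h2⟩, -⟩ := ha
  obtain ⟨-, ⟨h3, h4⟩, -⟩ := hb
  simp only [Sym2.map_mk, Sym2.eq_iff] at hab ⊢
  rcases hab with ⟨h5, h6⟩ | ⟨h5, h6⟩
  · exact Or.inl ⟨hf h1 h3 h5, hf h2 h4 h6⟩
  · exact Or.inr ⟨hf h1 h4 h5, hf h2 h3 h6⟩

/-- One step of the construction of a tree. -/
lemma tree_step {n : ℕ} {r M : ℝ} (hr0 : 0 ≤ r) (hr1 : r ≤ 1) (hn : 1 ≤ n) (hM1 : 1 ≤ M)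
    (J : SimpleGraph (Fin n)) (W Z : Finset (Fin n)) (hWZ : W ⊂ Z)
    (hsparse : ExpSparse n (r / 2) (J.induce (Z : Set (Fin n))))
    (hlead : Leading n r J W Z)
    (hM : min (((Z \ W).card : ℝ)) (2 * Real.logb 2 n) ≤ M)
    (f : Fin n → Fin n) (hf : Set.InjOn f (Z : Set (Fin n))) (hfix : ∀ w ∈ W, f w = w)
    (A : Set (Fin n)) (E : Set (Sym2 (Fin n))) (hWA : (W : Set (Fin n)) ⊆ A)
    (hEA : ∀ e ∈ E, ∀ x ∈ e, x ∈ A)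
    (hne : ((Sym2.map f '' rootedEdges J W Z) ∩ E).Nonempty)
    (μ : ℝ) (hμ : (n : ℝ) ^ (A \ (W : Set (Fin n))).ncard * r ^ E.ncard ≤ μ * M ^ E.ncard) :
    (n : ℝ) ^ ((A ∪ f '' (Z : Set (Fin n))) \ (W : Set (Fin n))).ncard *
        r ^ (E ∪ Sym2.map f '' rootedEdges J W Z).ncard ≤
      μ * M ^ (E ∪ Sym2.map f '' rootedEdges J W Z).ncard := by
  classical
  have hn' : (1 : ℝ) ≤ n := by exact_mod_cast hn
  set R := Sym2.map f '' rootedEdges J W Z with hR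
  set U : Finset (Fin n) := Z.filter (fun z => f z ∈ A) with hU
  have hUZ : U ⊆ Z := Finset.filter_subset _ _
  -- the new edges
  set new := (R \ E).ncard with hnew
  have hE : (E ∪ R).ncard = E.ncard + new := by
    rw [← Set.union_sdiff_self, Set.ncard_union_eq Set.disjoint_sdiff_right
      (Set.toFinite _) (Set.toFinite _)]
  -- the new vertices
  have hV : ((A ∪ f '' (Z : Set (Fin n))) \ (W : Set (Fin n))).ncard =
      (A \ (W : Set (Fin n))).ncard + (Z \ U).card := by
    have h1 : (A ∪ f '' (Z : Set (Fin n))) \ (W : Set (Fin n)) =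
        (A \ (W : Set (Fin n))) ∪ f '' ((Z \ U : Finset (Fin n)) : Set (Fin n)) := by
      ext x
      constructor
      · rintro ⟨hx | ⟨z, hz, rfl⟩, hxW⟩
        · exact Or.inl ⟨hx, hxW⟩
        · by_cases hA : f z ∈ A
          · exact Or.inl ⟨hA, hxW⟩
          · right
            refine ⟨z, ?_, rfl⟩
            rw [Finset.mem_coe, Finset.mem_sdiff, hU, Finset.mem_filter]
            exact ⟨hz, fun h => hA h.2⟩
      · rintro (hx | ⟨z, hz, rfl⟩)
        · exact ⟨Or.inl hx.1, hx.2⟩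
        · rw [Finset.mem_coe, Finset.mem_sdiff, hU, Finset.mem_filter] at hz
          exact ⟨Or.inr ⟨z, hz.1, rfl⟩, fun h => hz.2 ⟨hz.1, hWA h⟩⟩
    rw [h1, Set.ncard_union_eq _ (Set.toFinite _) (Set.toFinite _), Set.ncard_image_of_injOn,
      Set.ncard_coe_finset]
    · exact hf.mono (by intro x hx; exact (Finset.mem_sdiff.1 hx).1)
    · rw [Set.disjoint_left]
      rintro _ hx ⟨z, hz, rfl⟩
      rw [Finset.mem_coe, Finset.mem_sdiff, hU, Finset.mem_filter] at hz
      exact hz.2 ⟨hz.1, hx.1⟩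
  have hge : eWZ J U Z ≤ new := by
    unfold eWZ
    rw [Nat.card_coe_set_eq]
    have hsub : rootedEdges J U Z ⊆ rootedEdges J W Z := by
      rintro e ⟨h1, h2, h3⟩
      refine ⟨h1, h2, fun h => h3 fun x hx => ?_⟩
      rw [hU, Finset.mem_filter]
      refine ⟨h2 x hx, ?_⟩
      rw [hfix x (h x hx)]
      exact hWA (h x hx)
    rw [← Set.ncard_image_of_injOn ((map_injOn_rooted hf).mono hsub), hnew]
    apply Set.ncard_le_ncard _ (Set.toFinite _)
    rintro _ ⟨e, he, rfl⟩
    refine ⟨⟨e, hsub he, rfl⟩, fun hc => ?_⟩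
    apply he.2.2
    intro x hx
    rw [hU, Finset.mem_filter]
    exact ⟨he.2.1 x hx, hEA _ hc _ (Sym2.mem_map.2 ⟨x, hx, rfl⟩)⟩
  have key : (n : ℝ) ^ (Z \ U).card * r ^ new ≤ M ^ new := by
    by_cases hUe : U = Z
    · rw [hUe]
      simp only [Finset.sdiff_self, Finset.card_empty, pow_zero, one_mul]
      exact pow_le_pow_left₀ hr0 (hr1.trans hM1) _
    · have hss : U ⊂ Z := Finset.ssubset_iff_subset_ne.2 ⟨hUZ, hUe⟩
      have hWU : W ⊂ U := by
        have hWU' : W ⊆ U := by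
          intro w hw
          rw [hU, Finset.mem_filter]
          refine ⟨hWZ.1 hw, ?_⟩
          rw [hfix w hw]
          exact hWA hw
        refine ⟨hWU', fun hc => ?_⟩
        obtain ⟨_, ⟨e, he, rfl⟩, heE⟩ := hne
        apply he.2.2
        intro x hx
        apply hc
        rw [hU, Finset.mem_filter]
        exact ⟨he.2.1 x hx, hEA _ heE _ (Sym2.mem_map.2 ⟨x, hx, rfl⟩)⟩
      have hA := claimA hr0 hr1 hn hM1 J Z hsparse _ U rfl hss
        (fun Y hY hYZ => hlead Y (hWU.trans_subset hY) hYZ)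
        (le_trans (min_le_min_right _ (by
          exact_mod_cast Finset.card_le_card (Finset.sdiff_subset_sdiff (Finset.Subset.refl _) hWU.1))) hM)
      have hmu := (mu_lt_one_iff J U Z).1 (hlead U hWU hss)
      have hpos : (0 : ℝ) < autWZ J U Z := by exact_mod_cast autWZ_pos J U Z
      calc (n : ℝ) ^ (Z \ U).card * r ^ new ≤ (n : ℝ) ^ (Z \ U).card * r ^ (eWZ J U Z) := by
            gcongr 1
            exact pow_le_pow_of_le_one hr0 hr1 hge
        _ ≤ autWZ J U Z := hmu.le
        _ ≤ M * autWZ J U Z := le_mul_of_one_le_left hpos.le hM1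
        _ ≤ M ^ (eWZ J U Z) := hA
        _ ≤ M ^ new := pow_le_pow_right₀ hM1 hge
  rw [hE, hV, pow_add, pow_add, pow_add]
  calc _ = ((n : ℝ) ^ (A \ (W : Set (Fin n))).ncard * r ^ E.ncard) *
        ((n : ℝ) ^ (Z \ U).card * r ^ new) := by ring
    _ ≤ (μ * M ^ E.ncard) * M ^ new := by
        apply mul_le_mul hμ key (by positivity)
        exact le_trans (by positivity) hμ
    _ = _ := by ring

/-- Lemma 3.4: if `J[W,Z]` is `r`-leading and `J[Z]` is `(r/2)`-sparse, then for any
`[W,Z]`-tree `T` (a union of copies `ψ i` of `J[W,Z]` rooted at `W`, each sharing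
some but not all of its edges with the union of the earlier copies),
`n^{v(W,V(T))} r^{e_T} ≤ μ_r(W,Z) · min{v(W,Z), 16 log₂ n}^{e_T}`. -/
theorem tree_labeled_expectation_bound {n : ℕ} {r : ℝ} (hr0 : 0 ≤ r) (hr1 : r ≤ 1)
    (J : SimpleGraph (Fin n)) (W Z : Finset (Fin n)) (hWZ : W ⊂ Z)
    (hlead : Leading n r J W Z)
    (hsparse : ExpSparse n (r / 2) (J.induce (Z : Set (Fin n))))
    (m : ℕ) (hm : 0 < m) (ψ : Fin m → Fin n → Fin n)
    (hinj : ∀ i, Set.InjOn (ψ i) (Z : Set (Fin n)))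
    (hfix : ∀ i, ∀ w ∈ W, ψ i w = w)
    (hchain : ∀ i : Fin m, 0 < (i : ℕ) →
      ((Sym2.map (ψ i) '' rootedEdges J W Z) ∩
        (⋃ j : Fin m, ⋃ _ : (j : ℕ) < (i : ℕ), Sym2.map (ψ j) '' rootedEdges J W Z)).Nonempty ∧
      ¬ (Sym2.map (ψ i) '' rootedEdges J W Z ⊆
        ⋃ j : Fin m, ⋃ _ : (j : ℕ) < (i : ℕ), Sym2.map (ψ j) '' rootedEdges J W Z)) :
    (n : ℝ) ^ (Nat.card (((⋃ i, ψ i '' (Z : Set (Fin n))) \ (W : Set (Fin n)) : Set (Fin n)))) *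
        r ^ (Nat.card (⋃ i, Sym2.map (ψ i) '' rootedEdges J W Z)) ≤
      mu n r J W Z *
        (min (((Z \ W).card : ℝ)) (16 * Real.logb 2 n)) ^
          (Nat.card (⋃ i, Sym2.map (ψ i) '' rootedEdges J W Z)) := by
  classical
  have hvpos : 0 < (Z \ W).card := by
    rw [Finset.card_pos]; exact Finset.sdiff_nonempty.2 hWZ.2
  obtain ⟨z0, -⟩ := Finset.card_pos.1 hvpos
  have hn : 1 ≤ n := by have := z0.2; omega
  have hv1 : (1 : ℝ) ≤ (Z \ W).card := by exact_mod_cast hvpos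
  rcases Nat.lt_or_ge n 2 with hn2 | hn2
  · -- the trivial case `n = 1`
    obtain rfl : n = 1 := by omega
    have hR : rootedEdges J W Z = ∅ := by
      ext e
      induction e with
      | _ a b =>
      rw [mem_rooted]
      simp only [Set.mem_empty_iff_false, iff_false]
      intro h
      exact h.1.ne (Subsingleton.elim _ _)
    have ha : autWZ J W Z = 1 := by
      apply autWZ_card_one J W Z hWZ.1
      have := Finset.card_le_univ (Z \ W)
      rw [Fintype.card_fin] at this
      omega
    simp [mu, eWZ, ha, hR]
  have hn2' : (2 : ℝ) ≤ n := by exact_mod_cast hn2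
  have hlog : 1 ≤ Real.logb 2 n := by
    rw [Real.le_logb_iff_rpow_le (by norm_num) (by linarith)]
    simpa using hn2'
  set M : ℝ := min (((Z \ W).card : ℝ)) (16 * Real.logb 2 n) with hMdef
  have hM1 : 1 ≤ M := le_min hv1 (by linarith)
  have hM : min (((Z \ W).card : ℝ)) (2 * Real.logb 2 n) ≤ M :=
    min_le_min_left _ (by linarith)
  have hV : ∀ k : ℕ, (⋃ j : Fin m, ⋃ _ : (j : ℕ) < k, ψ j '' (Z : Set (Fin n))) =
      {x | ∃ j : Fin m, (j : ℕ) < k ∧ x ∈ ψ j '' (Z : Set (Fin n))} := by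
    intro k; ext x; simp only [Set.mem_iUnion, exists_prop, Set.mem_ofPred_eq]
  have main : ∀ k : ℕ, 1 ≤ k → k ≤ m →
      (n : ℝ) ^ (((⋃ j : Fin m, ⋃ _ : (j : ℕ) < k, ψ j '' (Z : Set (Fin n))) \
        (W : Set (Fin n))) : Set (Fin n)).ncard *
        r ^ (⋃ j : Fin m, ⋃ _ : (j : ℕ) < k, Sym2.map (ψ j) '' rootedEdges J W Z).ncard ≤
      mu n r J W Z *
        M ^ (⋃ j : Fin m, ⋃ _ : (j : ℕ) < k, Sym2.map (ψ j) '' rootedEdges J W Z).ncard := by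
    have hsplit : ∀ {α : Type} (g : Fin m → Set α) (k : ℕ) (hk : k < m),
        (⋃ j : Fin m, ⋃ _ : (j : ℕ) < k + 1, g j) =
          (⋃ j : Fin m, ⋃ _ : (j : ℕ) < k, g j) ∪ g ⟨k, hk⟩ := by
      intro α g k hk
      ext x
      simp only [Set.mem_iUnion, exists_prop, Set.mem_union]
      constructor
      · rintro ⟨j, hj, hx⟩
        rcases Nat.lt_or_ge (j : ℕ) k with h | h
        · exact Or.inl ⟨j, h, hx⟩
        · right
          have : j = ⟨k, hk⟩ := Fin.ext (by simp only; omega)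
          rwa [← this]
      · rintro (⟨j, hj, hx⟩ | hx)
        · exact ⟨j, by omega, hx⟩
        · exact ⟨⟨k, hk⟩, by simp, hx⟩
    intro k hk1
    induction k, hk1 using Nat.le_induction with
    | base =>
      intro hkm
      rw [hsplit _ 0 (by omega), hsplit _ 0 (by omega)]
      simp only [Nat.not_lt_zero, Set.iUnion_of_empty, Set.iUnion_empty, Set.empty_union]
      have hE : (Sym2.map (ψ ⟨0, by omega⟩) '' rootedEdges J W Z).ncard = eWZ J W Z := by
        rw [Set.ncard_image_of_injOn (map_injOn_rooted (hinj _))]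
        rfl
      have hA : (ψ ⟨0, by omega⟩ '' (Z : Set (Fin n)) \ (W : Set (Fin n))).ncard =
          (Z \ W).card := by
        rw [← Set.ncard_coe_finset, ← Set.ncard_image_of_injOn
          ((hinj ⟨0, by omega⟩).mono (s₁ := ((Z \ W : Finset (Fin n)) : Set (Fin n)))
            (by intro x hx; exact (Finset.mem_sdiff.1 hx).1))]
        congr 1
        ext x
        constructor
        · rintro ⟨⟨z, hz, rfl⟩, hx⟩
          refine ⟨z, ?_, rfl⟩
          rw [Finset.mem_coe, Finset.mem_sdiff]
          refine ⟨hz, fun hw => hx ?_⟩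
          rw [hfix _ _ hw]; exact hw
        · rintro ⟨z, hz, rfl⟩
          rw [Finset.mem_coe, Finset.mem_sdiff] at hz
          refine ⟨⟨z, hz.1, rfl⟩, fun hw => hz.2 ?_⟩
          have h1 := hfix ⟨0, by omega⟩ _ hw
          have h2 := hinj ⟨0, by omega⟩ (hWZ.1 hw) hz.1 h1
          rw [← h2]; exact hw
      rw [hE, hA]
      have hB := claimB hr0 hr1 hn hM1 J W Z hWZ hsparse hlead hM
      have hpos : (0 : ℝ) < autWZ J W Z := by exact_mod_cast autWZ_pos J W Z
      unfold mu
      rw [div_mul_eq_mul_div, le_div_iff₀ hpos]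
      exact mul_le_mul_of_nonneg_left hB (by positivity)
    | succ k hk ih =>
      intro hkm
      rw [hsplit _ k (by omega), hsplit _ k (by omega)]
      refine tree_step hr0 hr1 hn hM1 J W Z hWZ hsparse hlead hM _ (hinj _) (hfix _) _ _ ?_ ?_
        (hchain ⟨k, by omega⟩ (Nat.lt_of_lt_of_le Nat.zero_lt_one hk)).1 _ (ih (by omega))
      · intro w hw
        rw [hV]
        exact ⟨⟨0, hm⟩, Nat.lt_of_lt_of_le Nat.zero_lt_one hk, w, hWZ.1 hw, hfix _ w hw⟩
      · intro e he x hx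
        simp only [Set.mem_iUnion, exists_prop] at he
        obtain ⟨j, hj, e', he', rfl⟩ := he
        obtain ⟨y, hy, rfl⟩ := Sym2.mem_map.1 hx
        rw [hV]
        exact ⟨j, hj, y, he'.2.1 y hy, rfl⟩
  have hfull : ∀ {α : Type} (g : Fin m → Set α),
      (⋃ j : Fin m, ⋃ _ : (j : ℕ) < m, g j) = ⋃ j, g j := by
    intro α g
    ext x
    simp
  have := main m hm le_rfl
  rw [hfull, hfull] at this
  rw [Nat.card_coe_set_eq, Nat.card_coe_set_eq]
  exact this
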